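/- arXiv:2108.01566 — 3 statements merged into one kernel-verified Lean document; each statement's English description precedes it below -/
import Mathlib

section
/- Let (A, t) be a C_k-algebra and let U ⊆ A be an ultrafilter. Then N = ⋂_{i=0}^{k-1} (t^i(U) ∩ φ(t^i(U))) is a c-filter of A. -/
universe u

/-- Modal pseudocomplemented De Morgan algebra (mpM-algebra). -/
class MpM (A : Type u) extends DistribLattice A, BoundedOrder A where
  dm : A → A   -- De Morgan negation ∼
  ps : A → A   -- pseudocomplement *
  dm_dm : ∀ x : A, dm (dm x) = x
  dm_sup : ∀ x y : A, dm (x ⊔ y) = dm x ⊓ dm y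
  pseudo : ∀ a x : A, a ⊓ x = ⊥ ↔ x ≤ ps a
  modal : ∀ x : A, x ⊔ dm x ≤ x ⊔ ps x

open MpM

variable {A : Type u} [MpM A]

/-- ∇x = ∼(∼x ∧ x*) -/
def nabla (x : A) : A := dm (dm x ⊓ ps x)

/-- △x = ∼∇∼x -/
def tri (x : A) : A := dm (nabla (dm x))

/-- A C_k-algebra structure on an mpM-algebra `A`: an automorphism `t` with `t^k = id`. -/
structure CkStr (A : Type u) [MpM A] (k : ℕ) where
  t : A → A
  bij : Function.Bijective t
  map_inf : ∀ x y : A, t (x ⊓ y) = t x ⊓ t y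
  map_sup : ∀ x y : A, t (x ⊔ y) = t x ⊔ t y
  map_dm : ∀ x : A, t (dm x) = dm (t x)
  map_ps : ∀ x : A, t (ps x) = ps (t x)
  map_bot : t (⊥ : A) = ⊥
  map_top : t (⊤ : A) = ⊤
  periodic : ∀ x : A, t^[k] x = x

/-- Lattice filter: nonempty, upward closed, closed under binary meets. -/
def IsLatFilter (F : Set A) : Prop :=
  F.Nonempty ∧ (∀ x ∈ F, ∀ y : A, x ≤ y → y ∈ F) ∧ ∀ x ∈ F, ∀ y ∈ F, x ⊓ y ∈ F

/-- c-filter: a filter closed under △ and t. -/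
def IsCFilter {k : ℕ} (T : CkStr A k) (F : Set A) : Prop :=
  IsLatFilter F ∧ ∀ x ∈ F, tri x ∈ F ∧ T.t x ∈ F

/-- maximal c-filter: proper and not properly contained in a proper c-filter. -/
def IsMaxCFilter {k : ℕ} (T : CkStr A k) (N : Set A) : Prop :=
  IsCFilter T N ∧ N ≠ Set.univ ∧
    ∀ G : Set A, IsCFilter T G → G ≠ Set.univ → N ⊆ G → N = G

/-- prime filter -/
def IsPrimeFilter (P : Set A) : Prop :=
  IsLatFilter P ∧ P ≠ Set.univ ∧ ∀ x y : A, x ⊔ y ∈ P → x ∈ P ∨ y ∈ P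

/-- ultrafilter: maximal proper (lattice) filter -/
def IsUltraFilter (U : Set A) : Prop :=
  IsLatFilter U ∧ U ≠ Set.univ ∧
    ∀ G : Set A, IsLatFilter G → G ≠ Set.univ → U ⊆ G → U = G

/-- Birula–Rasiowa transformation φ(P) = A \ {∼x : x ∈ P}. -/
def brPhi (P : Set A) : Set A := Set.univ \ (dm '' P)

/-- a ⇁ b = (⋁_{i=1}^{k} ∇(∼ t^i(a))) ∨ b -/
def rimp {k : ℕ} (T : CkStr A k) (a b : A) : A :=
  ((Finset.Icc 1 k).sup fun i => nabla (dm (T.t^[i] a))) ⊔ b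

/-- cyclic deductive system -/
def IsCDS {k : ℕ} (T : CkStr A k) (D : Set A) : Prop :=
  (⊤ : A) ∈ D ∧ ∀ x ∈ D, ∀ y : A, rimp T x y ∈ D → y ∈ D

/-- maximal cyclic deductive system -/
def IsMaxCDS {k : ℕ} (T : CkStr A k) (M : Set A) : Prop :=
  IsCDS T M ∧ M ≠ Set.univ ∧
    ∀ G : Set A, IsCDS T G → G ≠ Set.univ → M ⊆ G → M = G

/-- the smallest cyclic deductive system containing `X` -/
def genCDS {k : ℕ} (T : CkStr A k) (X : Set A) : Set A :=
  ⋂₀ {D : Set A | IsCDS T D ∧ X ⊆ D}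

/-- K(A) = {x : t(x) = x and ∇x = x} -/
def Kset {k : ℕ} (T : CkStr A k) : Set A := {x : A | T.t x = x ∧ nabla x = x}

/-- consistency operator ∘x = ⋀_{i=0}^{k} t^i((∼x ∨ x) ∧ (x ∧ ∼x)*) -/
def cCirc {k : ℕ} (T : CkStr A k) (x : A) : A :=
  (Finset.Icc 0 k).inf fun i => T.t^[i] ((dm x ⊔ x) ⊓ ps (x ⊓ dm x))

/-- x → y = ∼((∼(x∨y))* ∧ (x∨y)) ∨ ((∼(x∧y))* ∧ (x∧y)) -/
def mpTo (x y : A) : A :=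
  dm (ps (dm (x ⊔ y)) ⊓ (x ⊔ y)) ⊔ (ps (dm (x ⊓ y)) ⊓ (x ⊓ y))

/-- x ⇒ y = (x → y) ∧ (∼y → ∼x) -/
def mpIff (x y : A) : A := mpTo x y ⊓ mpTo (dm y) (dm x)

/-- Filters deciding every element: the properties of ultrafilters used below. -/
def GoodF (V : Set A) : Prop :=
  IsLatFilter V ∧ (⊥ : A) ∉ V ∧ ∀ y : A, y ∈ V ∨ ps y ∈ V

theorem inf_ps_bot (a : A) : a ⊓ ps a = ⊥ := (pseudo a (ps a)).2 le_rfl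

theorem dm_inf' (x y : A) : dm (x ⊓ y) = dm x ⊔ dm y := by
  have h := dm_sup (dm x) (dm y)
  rw [dm_dm, dm_dm] at h
  rw [← h, dm_dm]

theorem dm_anti {x y : A} (h : x ≤ y) : dm y ≤ dm x := by
  have := dm_sup x y
  rw [sup_eq_right.2 h] at this
  rw [this]; exact inf_le_left

theorem good_of_ultra {U : Set A} (hU : IsUltraFilter U) : GoodF U := by
  obtain ⟨⟨hne, hup, hinf⟩, hp, hmax⟩ := hU
  have hbot : (⊥ : A) ∉ U := fun h => hp (Set.eq_univ_of_forall fun x => hup _ h x bot_le)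
  refine ⟨⟨hne, hup, hinf⟩, hbot, fun y => ?_⟩
  by_contra hcon
  push Not at hcon
  obtain ⟨hy, hps⟩ := hcon
  have hG := hmax {z | ∃ u ∈ U, u ⊓ y ≤ z} ?_ ?_ ?_
  · obtain ⟨u, hu⟩ := hne
    apply hy
    rw [hG]
    exact ⟨u, hu, inf_le_right⟩
  · refine ⟨?_, ?_, ?_⟩
    · obtain ⟨u, hu⟩ := hne
      exact ⟨_, u, hu, le_rfl⟩
    · rintro x ⟨u, hu, h⟩ z hz
      exact ⟨u, hu, h.trans hz⟩
    · rintro x ⟨u, hu, h⟩ z ⟨v, hv, h'⟩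
      exact ⟨u ⊓ v, hinf _ hu _ hv, le_inf
        ((inf_le_inf_right y inf_le_left).trans h) ((inf_le_inf_right y inf_le_right).trans h')⟩
  · intro h
    have : (⊥ : A) ∈ {z | ∃ u ∈ U, u ⊓ y ≤ z} := by rw [h]; trivial
    obtain ⟨u, hu, h⟩ := this
    exact hps (hup _ hu _ ((pseudo y u).1 (by rw [inf_comm]; exact le_bot_iff.1 h)))
  · intro u hu
    exact ⟨u, hu, inf_le_left⟩

theorem GoodF.prime {V : Set A} (h : GoodF V) {x y : A} (hx : x ∉ V) (hy : y ∉ V) :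
    x ⊔ y ∉ V := by
  obtain ⟨⟨_, _, hinf⟩, hb, hd⟩ := h
  intro hxy
  apply hb
  have h1 := hinf _ hxy _ (hinf _ ((hd x).resolve_left hx) _ ((hd y).resolve_left hy))
  have : (x ⊔ y) ⊓ (ps x ⊓ ps y) = ⊥ := by
    rw [inf_sup_right, ← inf_assoc, inf_ps_bot, inf_comm (ps x), ← inf_assoc, inf_ps_bot]
    simp
  rwa [this] at h1

theorem GoodF.image {k : ℕ} (T : CkStr A k) {V : Set A} (h : GoodF V) : GoodF (T.t '' V) := by
  obtain ⟨⟨hne, hup, hinf⟩, hb, hd⟩ := h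
  refine ⟨⟨hne.image _, ?_, ?_⟩, ?_, ?_⟩
  · rintro _ ⟨x, hx, rfl⟩ y hy
    obtain ⟨z, rfl⟩ := T.bij.2 y
    refine ⟨z, hup x hx z ?_, rfl⟩
    apply sup_eq_right.1
    apply T.bij.1
    rw [T.map_sup, sup_eq_right.2 hy]
  · rintro _ ⟨x, hx, rfl⟩ _ ⟨y, hy, rfl⟩
    exact ⟨_, hinf x hx y hy, T.map_inf x y⟩
  · rintro ⟨x, hx, h⟩
    rw [← T.map_bot] at h
    rw [T.bij.1 h] at hx
    exact hb hx
  · intro y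
    obtain ⟨z, rfl⟩ := T.bij.2 y
    rw [← T.map_ps]
    exact (hd z).imp (Set.mem_image_of_mem _) (Set.mem_image_of_mem _)

theorem good_iter {k : ℕ} (T : CkStr A k) {U : Set A} (h : GoodF U) (i : ℕ) :
    GoodF (T.t^[i] '' U) := by
  induction i with
  | zero => simpa using h
  | succ n ih =>
    rw [Function.iterate_succ', Set.image_comp]
    exact ih.image T

theorem mem_brPhi (V : Set A) (x : A) : x ∈ brPhi V ↔ dm x ∉ V := by
  unfold brPhi
  constructor
  · rintro ⟨_, h⟩ hx
    exact h ⟨_, hx, dm_dm x⟩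
  · intro h
    refine ⟨trivial, ?_⟩
    rintro ⟨y, hy, rfl⟩
    rw [dm_dm] at h
    exact h hy

theorem shift {k : ℕ} (T : CkStr A k) (U : Set A) (i : ℕ) (hi : i < k) :
    ∃ j < k, ∀ x, T.t x ∈ T.t^[i] '' U ↔ x ∈ T.t^[j] '' U := by
  have key : ∀ j x, T.t x ∈ T.t^[j+1] '' U ↔ x ∈ T.t^[j] '' U := by
    intro j x
    rw [Function.iterate_succ', Set.image_comp]
    exact T.bij.1.mem_set_image
  cases i with
  | succ n => exact ⟨n, by omega, key n⟩
  | zero =>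
    refine ⟨k - 1, by omega, fun x => ?_⟩
    rw [← key (k - 1), Nat.sub_add_cancel hi]
    have : T.t^[k] = id := funext T.periodic
    rw [this]; rfl

theorem stmt1 {k : ℕ} (hk : 0 < k) (T : CkStr A k) (U : Set A)
    (hU : IsUltraFilter U) :
    IsCFilter T (⋂ i ∈ Finset.range k, (T.t^[i] '' U ∩ brPhi (T.t^[i] '' U))) := by
  have hg := good_iter T (good_of_ultra hU)
  have hm : ∀ x, x ∈ (⋂ i ∈ Finset.range k, (T.t^[i] '' U ∩ brPhi (T.t^[i] '' U))) ↔
      ∀ i < k, x ∈ T.t^[i] '' U ∧ dm x ∉ T.t^[i] '' U := by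
    intro x
    simp only [Set.mem_iInter, Finset.mem_range, Set.mem_inter_iff, mem_brPhi]
  refine ⟨⟨⟨⊤, ?_⟩, ?_, ?_⟩, ?_⟩
  · rw [hm]
    intro i _
    obtain ⟨⟨⟨z, hz⟩, hup, _⟩, hb, _⟩ := hg i
    refine ⟨hup z hz _ le_top, ?_⟩
    have : dm (⊤ : A) = ⊥ := by
      apply le_bot_iff.1
      have := dm_anti (le_top : dm (⊥ : A) ≤ ⊤)
      rwa [dm_dm] at this
    rwa [this]
  · intro x hx y hxy
    rw [hm] at hx ⊢
    intro i hi
    obtain ⟨⟨_, hup, _⟩, _⟩ := hg i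
    exact ⟨hup x (hx i hi).1 y hxy, fun h => (hx i hi).2 (hup _ h _ (dm_anti hxy))⟩
  · intro x hx y hy
    rw [hm] at hx hy ⊢
    intro i hi
    refine ⟨(hg i).1.2.2 _ (hx i hi).1 _ (hy i hi).1, ?_⟩
    rw [dm_inf']
    exact (hg i).prime (hx i hi).2 (hy i hi).2
  · intro x hx
    rw [hm] at hx
    rw [hm, hm]
    refine ⟨fun i hi => ?_, fun i hi => ?_⟩
    · obtain ⟨h1, h2⟩ := hx i hi
      have ht : tri x = x ⊓ ps (dm x) := by
        unfold tri nabla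
        rw [dm_dm, dm_dm]
      rw [ht]
      refine ⟨(hg i).1.2.2 _ h1 _ (((hg i).2.2 _).resolve_left h2), ?_⟩
      rw [dm_inf']
      refine (hg i).prime h2 fun h3 => h2 ?_
      have h4 := dm_anti (modal (dm x))
      rw [dm_sup, dm_sup, dm_dm] at h4
      exact (hg i).1.2.1 _ ((hg i).1.2.2 _ h1 _ h3) _ (h4.trans inf_le_right)
    · obtain ⟨j, hj, h⟩ := shift T U i hi
      rw [← T.map_dm, h, h]
      exact hx j hj
end

section
/- Every simple C_k-algebra is finite. That is, if (A, t) is a C_k-algebra with 0 ≠ 1 whose only c-filters are {1} and A, then the underlying set A is finite. -/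
universe u

open MpM

variable {A : Type u} [MpM A]

namespace CkAux

theorem dm_inf' (x y : A) : dm (x ⊓ y) = dm x ⊔ dm y := by
  have h := dm_sup (dm x) (dm y)
  rw [dm_dm, dm_dm] at h
  rw [← h, dm_dm]

theorem dm_le {x y : A} (h : x ≤ y) : dm y ≤ dm x := by
  have h1 : x ⊔ y = y := sup_eq_right.mpr h
  have h2 := dm_sup x y
  rw [h1] at h2
  rw [h2]
  exact inf_le_left

theorem dm_bot : dm (⊥ : A) = ⊤ := by
  apply top_le_iff.mp
  have := dm_le (bot_le : (⊥ : A) ≤ dm ⊤)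
  rwa [dm_dm] at this

theorem dm_top : dm (⊤ : A) = ⊥ := by
  rw [← dm_bot, dm_dm]

theorem tri_eq (x : A) : tri x = x ⊓ ps (dm x) := by
  simp only [tri, nabla, dm_dm]

/-- Prime filter, in a convenient form. -/
structure PF (P : Set A) : Prop where
  top : (⊤ : A) ∈ P
  bot : (⊥ : A) ∉ P
  up : ∀ x ∈ P, ∀ y : A, x ≤ y → y ∈ P
  inf : ∀ x ∈ P, ∀ y ∈ P, x ⊓ y ∈ P
  prime : ∀ x y : A, x ⊔ y ∈ P → x ∈ P ∨ y ∈ P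

/-- Birula-Rasiowa transform -/
def ph (P : Set A) : Set A := {x | dm x ∉ P}

theorem PF.ph {P : Set A} (h : PF P) : PF (ph P) where
  top := by
    show dm ⊤ ∉ P
    rw [dm_top]; exact h.bot
  bot := by
    show ¬ (dm ⊥ ∉ P)
    rw [dm_bot]; exact not_not.mpr h.top
  up := fun x hx y hxy hy => hx (h.up _ hy _ (dm_le hxy))
  inf := fun x hx y hy hxy => by
    rw [dm_inf'] at hxy
    exact (h.prime _ _ hxy).elim hx hy
  prime := fun x y hxy => by
    by_contra hc
    push Not at hc
    have h1 : dm x ∈ P := not_not.mp hc.1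
    have h2 : dm y ∈ P := not_not.mp hc.2
    apply hxy
    rw [dm_sup]
    exact h.inf _ h1 _ h2

theorem PF.sep {x y : A} (h : ¬ x ≤ y) : ∃ P : Set A, PF P ∧ x ∈ P ∧ y ∉ P := by
  have hd : Disjoint (Order.PFilter.principal x : Set A) (Order.Ideal.principal y : Set A) := by
    rw [Set.disjoint_left]
    intro z hz hz'
    exact h (le_trans (Order.PFilter.mem_principal.mp hz) (Order.Ideal.mem_principal.mp hz'))
  obtain ⟨J, hJ, hyJ, hdJ⟩ := DistribLattice.prime_ideal_of_disjoint_filter_ideal hd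
  have hxJ : x ∉ J := fun hx =>
    Set.disjoint_left.mp hdJ (Order.PFilter.mem_principal.mpr le_rfl) hx
  refine ⟨{z | z ∉ J}, ⟨?_, ?_, ?_, ?_, ?_⟩, hxJ, ?_⟩
  · intro ht; exact hxJ (J.lower le_top ht)
  · intro hb; exact hb J.bot_mem
  · intro a ha b hab hb; exact ha (J.lower hab hb)
  · intro a ha b hb hab
    exact (hJ.mem_or_mem hab).elim ha hb
  · intro a b hab
    by_contra hc
    push Not at hc
    exact hab (Order.Ideal.sup_mem (not_not.mp hc.1) (not_not.mp hc.2))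
  · intro hy; exact hy (hyJ (Order.Ideal.mem_principal.mpr le_rfl))

theorem step1 {P Q : Set A} (hP : PF P) (hQ : PF Q) (h : P ⊆ Q) : Q ⊆ P ∨ Q ⊆ ph P := by
  have key : ∀ a ∈ Q, a ∈ P ∨ a ∈ ph P := by
    intro a ha
    by_contra hc
    push Not at hc
    have h1 : dm a ∈ P := not_not.mp hc.2
    have h2 : a ⊔ ps a ∈ P := hP.up _ h1 _ (le_trans le_sup_right (modal a))
    have h3 : ps a ∈ P := (hP.prime _ _ h2).resolve_left hc.1
    have h4 := hQ.inf _ ha _ (h h3)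
    rw [(pseudo a (ps a)).mpr le_rfl] at h4
    exact hQ.bot h4
  by_contra hc
  push Not at hc
  obtain ⟨a, ha, ha'⟩ := Set.not_subset.mp hc.1
  obtain ⟨b, hb, hb'⟩ := Set.not_subset.mp hc.2
  rcases key _ (hQ.inf _ ha _ hb) with h1 | h1
  · exact ha' (hP.up _ h1 _ inf_le_left)
  · exact hb' (hP.ph.up _ h1 _ inf_le_right)

theorem step2 {P Q : Set A} (hP : PF P) (hQ : PF Q) (h : P ⊆ Q) : Q = P ∨ Q = ph P := by
  rcases step1 hP hQ h with h1 | h1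
  · exact Or.inl (h1.antisymm h)
  · rcases step1 hQ hP.ph h1 with h2 | h2
    · exact Or.inr (h1.antisymm h2)
    · refine Or.inl (Set.Subset.antisymm ?_ h)
      intro x hx
      by_contra hxP
      have : dm x ∈ ph P := by
        show dm (dm x) ∉ P
        rwa [dm_dm]
      have h3 : dm (dm x) ∉ Q := h2 this
      rw [dm_dm] at h3
      exact h3 hx

theorem ph_ph (P : Set A) : ph (ph P) = P := by
  ext x
  show ¬ (dm (dm x) ∉ P) ↔ _
  rw [dm_dm, not_not]

theorem tri_mem {P : Set A} (hP : PF P) {x : A} (h1 : x ∈ P) (h2 : x ∈ ph P) : tri x ∈ P := by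
  rw [tri_eq]
  refine hP.inf _ h1 _ ?_
  have h3 : dm x ⊔ ps (dm x) ∈ P := by
    refine hP.up _ h1 _ (le_trans ?_ (modal (dm x)))
    rw [dm_dm]; exact le_sup_right
  exact (hP.prime _ _ h3).resolve_left h2

/-- the pullback of `P` along `t^i` -/
def pull {k : ℕ} (T : CkStr A k) (i : ℕ) (P : Set A) : Set A := {x | T.t^[i] x ∈ P}

theorem pull_succ {k : ℕ} (T : CkStr A k) (i : ℕ) (P : Set A) :
    pull T (i + 1) P = pull T 1 (pull T i P) := by
  ext x; simp [pull, Function.iterate_succ_apply]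

theorem pull_ph {k : ℕ} (T : CkStr A k) (i : ℕ) (P : Set A) :
    ph (pull T i P) = pull T i (ph P) := by
  have h : ∀ x : A, T.t^[i] (dm x) = dm (T.t^[i] x) := by
    induction i with
    | zero => intro x; rfl
    | succ n ih => intro x; rw [Function.iterate_succ_apply, T.map_dm, ih]; rfl
  ext x
  show T.t^[i] (dm x) ∉ P ↔ dm (T.t^[i] x) ∉ P
  rw [h]

theorem PF.pull {k : ℕ} (T : CkStr A k) (i : ℕ) {P : Set A} (hP : PF P) : PF (pull T i P) := by
  induction i with
  | zero => exact hP
  | succ n ih =>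
    rw [pull_succ]
    refine ⟨?_, ?_, ?_, ?_, ?_⟩
    · show T.t ⊤ ∈ CkAux.pull T n P
      rw [T.map_top]; exact ih.top
    · show T.t ⊥ ∉ CkAux.pull T n P
      rw [T.map_bot]; exact ih.bot
    · intro x hx y hxy
      refine ih.up _ hx _ ?_
      show T.t x ≤ T.t y
      rw [← inf_eq_left, ← T.map_inf, inf_eq_left.mpr hxy]
    · intro x hx y hy
      show T.t (x ⊓ y) ∈ CkAux.pull T n P
      rw [T.map_inf]; exact ih.inf _ hx _ hy
    · intro x y hxy
      apply ih.prime
      show T.t x ⊔ T.t y ∈ CkAux.pull T n P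
      rw [← T.map_sup]; exact hxy

theorem pull_mod {k : ℕ} (T : CkStr A k) (i : ℕ) (P : Set A) : pull T i P = pull T (i % k) P := by
  have h : ∀ x : A, T.t^[i] x = T.t^[i % k] x := fun x =>
    ((show Function.IsPeriodicPt T.t k x from T.periodic x).iterate_mod_apply i).symm
  ext x
  show T.t^[i] x ∈ P ↔ T.t^[i % k] x ∈ P
  rw [h]

theorem exists_of_sup {Q : Set A} (hQ : PF Q) {ι : Type*} (s : Finset ι) (f : ι → A)
    (h : s.sup f ∈ Q) : ∃ i ∈ s, f i ∈ Q := by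
  classical
  induction s using Finset.induction_on with
  | empty => exact absurd h hQ.bot
  | insert a s _ ih =>
    rw [Finset.sup_insert] at h
    rcases hQ.prime _ _ h with h | h
    · exact ⟨a, Finset.mem_insert_self _ _, h⟩
    · obtain ⟨i, hi, hi'⟩ := ih h
      exact ⟨i, Finset.mem_insert_of_mem hi, hi'⟩

end CkAux

open CkAux in
theorem stmt15 {k : ℕ} (hk : 0 < k) (T : CkStr A k) (hnt : (⊥ : A) ≠ ⊤)
    (hsimple : ∀ F : Set A, IsCFilter T F → F = {(⊤ : A)} ∨ F = Set.univ) :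
    Finite A := by
  obtain ⟨P, hP, -, -⟩ := PF.sep (x := (⊤ : A)) (y := ⊥) (fun h => hnt (le_bot_iff.mp h).symm)
  have hF : IsCFilter T {x : A | ∀ i, x ∈ pull T i P ∧ x ∈ pull T i (ph P)} := by
    refine ⟨⟨⟨⊤, fun i => ⟨(hP.pull T i).top, (hP.ph.pull T i).top⟩⟩, ?_, ?_⟩, ?_⟩
    · intro x hx y hxy i
      exact ⟨(hP.pull T i).up _ (hx i).1 _ hxy, (hP.ph.pull T i).up _ (hx i).2 _ hxy⟩
    · intro x hx y hy i
      exact ⟨(hP.pull T i).inf _ (hx i).1 _ (hy i).1, (hP.ph.pull T i).inf _ (hx i).2 _ (hy i).2⟩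
    · intro x hx
      refine ⟨fun i => ⟨tri_mem (hP.pull T i) (hx i).1 ?_,
        tri_mem (hP.ph.pull T i) (hx i).2 ?_⟩, fun i => hx (i + 1)⟩
      · rw [pull_ph]; exact (hx i).2
      · rw [pull_ph, ph_ph]; exact (hx i).1
  have hF1 : {x : A | ∀ i, x ∈ pull T i P ∧ x ∈ pull T i (ph P)} = {(⊤ : A)} := by
    refine (hsimple _ hF).resolve_right ?_
    intro h
    have : (⊥ : A) ∈ {x : A | ∀ i, x ∈ pull T i P ∧ x ∈ pull T i (ph P)} := by
      rw [h]; trivial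
    exact hP.bot (this 0).1
  have hall : ∀ Q : Set A, PF Q → ∃ i : Fin k, Q = pull T i P ∨ Q = pull T i (ph P) := by
    intro Q hQ
    have h1 : ∃ i : Fin k, pull T i P ⊆ Q ∨ pull T i (ph P) ⊆ Q := by
      by_contra hc
      push Not at hc
      choose a ha ha' using fun i => Set.not_subset.mp (hc i).1
      choose b hb hb' using fun i => Set.not_subset.mp (hc i).2
      have hs : (Finset.univ.sup fun i => a i ⊔ b i) ∈
          {x : A | ∀ i, x ∈ pull T i P ∧ x ∈ pull T i (ph P)} := by
        intro i
        rw [pull_mod T i P, pull_mod T i (ph P)]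
        have hle := Finset.le_sup (f := fun i => a i ⊔ b i)
          (Finset.mem_univ (⟨i % k, Nat.mod_lt _ hk⟩ : Fin k))
        exact ⟨(hP.pull T _).up _ (ha ⟨i % k, Nat.mod_lt _ hk⟩) _ (le_trans le_sup_left hle),
          (hP.ph.pull T _).up _ (hb ⟨i % k, Nat.mod_lt _ hk⟩) _ (le_trans le_sup_right hle)⟩
      rw [hF1] at hs
      have hs' : (Finset.univ.sup fun i => a i ⊔ b i) ∈ Q := by
        rw [Set.mem_singleton_iff.mp hs]; exact hQ.top
      obtain ⟨i, -, hi⟩ := exists_of_sup hQ _ _ hs'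
      exact (hQ.prime _ _ hi).elim (ha' i) (hb' i)
    obtain ⟨i, h | h⟩ := h1
    · refine ⟨i, ?_⟩
      have := step2 (hP.pull T i) hQ h
      rwa [pull_ph] at this
    · refine ⟨i, ?_⟩
      have := step2 (hP.ph.pull T i) hQ h
      rw [pull_ph, ph_ph] at this
      exact this.symm
  let f : A → Set (Fin k) × Set (Fin k) := fun x =>
    ({i | x ∈ pull T i P}, {i | x ∈ pull T i (ph P)})
  have hle : ∀ x y : A, f x = f y → x ≤ y := by
    intro x y hxy
    by_contra hc
    obtain ⟨Q, hQ, hx, hy⟩ := PF.sep hc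
    obtain ⟨i, rfl | rfl⟩ := hall Q hQ
    · have h1 : i ∈ (f x).1 := hx
      rw [hxy] at h1
      exact hy h1
    · have h1 : i ∈ (f x).2 := hx
      rw [hxy] at h1
      exact hy h1
  exact Finite.of_injective f fun x y h => le_antisymm (hle _ _ h) (hle _ _ h.symm)
end

section
/- Let A be an mpM-algebra with 0 ≠ 1 such that ∇x = 1 for every x ≠ 0 (as holds in the simple mpM-algebras T₂, T₃, T₄). Equip the product A^k with componentwise operations and the shift automorphism t(x₁, x₂, …, x_k) = (x_k, x₁, x₂, …, x_{k-1}). Then (A^k, t) is a C_k-algebra and K(A^k) = {0, 1}, where K(A^k) = {z ∈ A^k : t(z) = z and ∇z = z}; consequently (A^k, t) is a simple C_k-algebra (its only c-filters are {1} and A^k). -/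
universe u

open MpM

variable {A : Type u} [MpM A]

instance piMpM (k : ℕ) : MpM (Fin k → A) where
  dm f := fun i => dm (f i)
  ps f := fun i => ps (f i)
  dm_dm f := funext fun i => dm_dm (f i)
  dm_sup f g := funext fun i => dm_sup (f i) (g i)
  pseudo a x := by
    constructor
    · intro h i
      exact (pseudo (a i) (x i)).mp (congrFun h i)
    · intro h
      funext i
      exact (pseudo (a i) (x i)).mpr (h i)
  modal f := fun i => modal (f i)

theorem aux_dm_bot : dm (⊥ : A) = ⊤ := by
  have h : dm ((⊥ : A) ⊔ dm ⊤) = dm ⊥ ⊓ dm (dm ⊤) := dm_sup _ _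
  rw [bot_sup_eq, dm_dm, inf_top_eq] at h
  exact h.symm

theorem aux_dm_top : dm (⊤ : A) = ⊥ := by
  rw [← aux_dm_bot, dm_dm]

theorem aux_nabla_bot : nabla (⊥ : A) = ⊥ := by
  have h : ps (⊥ : A) = ⊤ := top_le_iff.mp ((pseudo (⊥ : A) ⊤).mp (by simp))
  simp [nabla, h, aux_dm_bot, aux_dm_top]

open scoped Fin.CommRing in
theorem aux_iter {B : Type u} {k : ℕ} [NeZero k] (n : ℕ) (f : Fin k → B) (i : Fin k) :
    (fun (g : Fin k → B) (j : Fin k) => g (j - 1))^[n] f i = f (i - (n : Fin k)) := by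
  induction n generalizing i with
  | zero => simp
  | succ n ih =>
    rw [Function.iterate_succ_apply']
    show (fun (g : Fin k → B) (j : Fin k) => g (j - 1))^[n] f (i - 1) = _
    rw [ih]
    congr 1
    push_cast
    ring

open scoped Fin.CommRing in
theorem aux_per {B : Type u} {k : ℕ} [NeZero k] (f : Fin k → B) :
    (fun (g : Fin k → B) (j : Fin k) => g (j - 1))^[k] f = f := by
  funext i
  rw [aux_iter]
  simp

theorem aux_hit {B : Type u} {k : ℕ} [NeZero k] (f : Fin k → B) (i j : Fin k) :
    ∃ n ∈ Finset.range k, (fun (g : Fin k → B) (j : Fin k) => g (j - 1))^[n] f j = f i := by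
  refine ⟨(j - i).val, Finset.mem_range.mpr (j - i).isLt, ?_⟩
  rw [aux_iter]
  congr 1
  simp

/-- The shift C_k-structure on the power. -/
def auxT (k : ℕ) [NeZero k] : CkStr (Fin k → A) k where
  t := fun g j => g (j - 1)
  bij := by
    constructor
    · intro f g h
      funext i
      have := congrFun h (i + 1)
      simpa using this
    · intro f
      exact ⟨fun j => f (j + 1), by funext j; simp⟩
  map_inf _ _ := rfl
  map_sup _ _ := rfl
  map_dm _ := rfl
  map_ps _ := rfl
  map_bot := rfl
  map_top := rfl
  periodic := aux_per

theorem aux_inf {B : Type u} [MpM B] {F : Set B} (h : IsLatFilter F) (g : ℕ → B)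
    (s : Finset ℕ) (hg : ∀ n, g n ∈ F) : s.inf g ∈ F := by
  induction s using Finset.induction_on with
  | empty =>
    obtain ⟨x, hx⟩ := h.1
    exact h.2.1 x hx _ le_top
  | insert a s _ ih =>
    rw [Finset.inf_insert]
    exact h.2.2 _ (hg a) _ ih

theorem stmt16 {k : ℕ} [NeZero k] (hnt : (⊥ : A) ≠ ⊤)
    (hnab : ∀ x : A, x ≠ ⊥ → nabla x = ⊤) :
    ∃ T : CkStr (Fin k → A) k,
      (∀ (f : Fin k → A) (i : Fin k), T.t f i = f (i - 1)) ∧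
      Kset T = {(⊥ : Fin k → A), ⊤} ∧
      ∀ F : Set (Fin k → A), IsCFilter T F → F = {(⊤ : Fin k → A)} ∨ F = Set.univ := by
  refine ⟨auxT k, fun _ _ => rfl, ?_, ?_⟩
  · ext z
    simp only [Set.mem_insert_iff, Set.mem_singleton_iff]
    constructor
    · rintro ⟨h1, h2⟩
      have hn : ∀ n : ℕ, (auxT (A := A) k).t^[n] z = z := fun n =>
        Function.iterate_fixed h1 n
      have hc : ∀ j, z j = z 0 := by
        intro j
        obtain ⟨n, -, h⟩ := aux_hit z 0 j
        rw [← h]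
        exact (congrFun (hn n) j).symm
      have h0 : nabla (z 0) = z 0 := congrFun h2 0
      by_cases hz : z 0 = ⊥
      · left
        funext j
        rw [hc j, hz]
        rfl
      · right
        funext j
        rw [hc j, ← h0, hnab _ hz]
        rfl
    · rintro (rfl | rfl)
      · exact ⟨rfl, funext fun _ => aux_nabla_bot⟩
      · exact ⟨rfl, funext fun _ => hnab _ hnt.symm⟩
  · intro F hF
    by_cases hx : ∃ x ∈ F, x ≠ ⊤
    · right
      obtain ⟨x, hxF, hx⟩ := hx
      obtain ⟨i, hi⟩ := Function.ne_iff.mp hx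
      have hy := (hF.2 x hxF).1
      have hyi : tri x i = ⊥ := by
        show dm (nabla (dm (x i))) = ⊥
        rw [hnab, aux_dm_top]
        intro h
        apply hi
        rw [← dm_dm (x i), h, aux_dm_bot]
        rfl
      have hit : ∀ n : ℕ, (auxT (A := A) k).t^[n] (tri x) ∈ F := by
        intro n
        induction n with
        | zero => exact hy
        | succ n ih =>
          rw [Function.iterate_succ_apply']
          exact (hF.2 _ ih).2
      have hm := aux_inf hF.1 _ (Finset.range k) hit
      apply Set.eq_univ_of_forall
      intro w
      refine hF.1.2.1 _ hm w ?_
      intro j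
      obtain ⟨n, hn, h⟩ := aux_hit (tri x) i j
      have hle := Finset.inf_le (f := fun n => (auxT (A := A) k).t^[n] (tri x)) hn j
      refine le_trans hle (le_trans (le_of_eq (h.trans hyi)) bot_le)
    · left
      push Not at hx
      obtain ⟨x, hxF⟩ := hF.1.1
      ext w
      constructor
      · exact fun h => hx w h
      · rintro rfl
        exact hF.1.2.1 x hxF _ le_top
end
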